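/- Let z = (μ,x) ∈ ℝ × ℝⁿ with μ > 0, let 0 < β < μ, let γ > 0, let δ ∈ (0,1), let C ∈ ℝ with ‖H(z)‖² ≤ C, and let Δz = (Δμ, Δx) satisfy H'(z)Δz = −H(z) + β e⁽¹⁾, where e⁽¹⁾ = (1,0) ∈ ℝ × ℝⁿ, H'(z) : (Δμ, Δx) ↦ (Δμ, AΔx + B(Δμ·V₁ + V₂Δx)), (V₁)_i = μ/√(μ² + x_i²) − 1 and V₂ = diag(x_i/√(μ² + x_i²)). Then there exists a nonnegative integer l such that ‖H(z + δˡ Δz)‖² ≤ C − γ‖δˡ Δz‖². -/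

import Mathlib

/-- The componentwise smoothing map `Φ(μ,x)_i = √(μ² + x_i²) − μ`. -/
noncomputable def PhiV {n : ℕ} (μ : ℝ) (x : Fin n → ℝ) : Fin n → ℝ :=
  fun i => Real.sqrt (μ ^ 2 + x i ^ 2) - μ

/-- The vector part of `H`: `Ax + BΦ(μ,x) − b`. -/
noncomputable def Hvec {n : ℕ} (A B : Matrix (Fin n) (Fin n) ℝ) (b : Fin n → ℝ)
    (μ : ℝ) (x : Fin n → ℝ) : Fin n → ℝ :=
  A.mulVec x + B.mulVec (PhiV μ x) - b

/-- The squared Euclidean norm of `H(μ,x)`: `‖H(z)‖² = μ² + ‖Ax + BΦ(μ,x) − b‖²`. -/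
noncomputable def Mfun {n : ℕ} (A B : Matrix (Fin n) (Fin n) ℝ) (b : Fin n → ℝ)
    (μ : ℝ) (x : Fin n → ℝ) : ℝ :=
  μ ^ 2 + ∑ i, Hvec A B b μ x i ^ 2

/-- The vector part of `H'(z)` applied to the direction `(Δμ, Δx)`. -/
noncomputable def HDvec {n : ℕ} (A B : Matrix (Fin n) (Fin n) ℝ)
    (μ : ℝ) (x : Fin n → ℝ) (Δμ : ℝ) (Δx : Fin n → ℝ) : Fin n → ℝ :=
  A.mulVec Δx +
    B.mulVec (fun i =>
      Δμ * (μ / Real.sqrt (μ ^ 2 + x i ^ 2) - 1) +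
        (x i / Real.sqrt (μ ^ 2 + x i ^ 2)) * Δx i)

/-!
Let `F(t) = ‖H(z + tΔz)‖²`. The chain rule and the Newton equation `H'(z)Δz = -H(z) + βe⁽¹⁾` give
`F'(0) = 2⟪H(z), H'(z)Δz⟫ = 2(βμ - ‖H(z)‖²)`, which is negative because `βμ < μ² ≤ ‖H(z)‖²`.
The required decrease `γ‖tΔz‖²` is of second order in `t`, so the first-order decrease of `F`
dominates it for all small `t > 0`, in particular for `t = δˡ` with `l` large.
-/

open Filter Set
open scoped Topology

theorem eventually_lt_sub_mul_sq_of_hasDerivWithinAt_neg {f : ℝ → ℝ} {f' a : ℝ}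
    (hf : HasDerivWithinAt f f' (Ioi a) a) (hf' : f' < 0) (K : ℝ) :
    ∀ᶠ t in 𝓝[>] a, f t < f a - K * (t - a) ^ 2 := by
  have hpert : HasDerivWithinAt (fun t => f t + K * (t - a) ^ 2) f' (Ioi a) a := by
    have hsq : HasDerivAt (fun t => K * (t - a) ^ 2) 0 a := by
      simpa using (((hasDerivAt_id a).sub_const a).fun_pow 2).const_mul K
    simpa using hf.fun_add hsq.hasDerivWithinAt
  filter_upwards [hpert.limsup_slope_le' self_notMem_Ioi hf', self_mem_nhdsWithin]
    with t hslope ht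
  rw [slope_def_field, div_lt_iff₀ (sub_pos.2 ht)] at hslope
  linarith

theorem hasDerivAt_mulVec {𝕜 ι κ : Type*} [NontriviallyNormedField 𝕜] [Finite ι]
    [Fintype κ] (A : Matrix ι κ 𝕜) {v : 𝕜 → κ → 𝕜} {v' : κ → 𝕜} {t : 𝕜}
    (hv : HasDerivAt v v' t) : HasDerivAt (fun s => A.mulVec (v s)) (A.mulVec v') t :=
  have := Fintype.ofFinite ι
  hasDerivAt_pi.2 fun i => HasDerivAt.fun_sum fun j _ => (hasDerivAt_pi.1 hv j).const_mul (A i j)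

theorem hasDerivAt_sqrt_sq_add_sq {u v : ℝ → ℝ} {u' v' t : ℝ} (hu : HasDerivAt u u' t)
    (hv : HasDerivAt v v' t) (h₀ : u t ^ 2 + v t ^ 2 ≠ 0) :
    HasDerivAt (fun s => √(u s ^ 2 + v s ^ 2))
      ((u t * u' + v t * v') / √(u t ^ 2 + v t ^ 2)) t := by
  refine (((hu.fun_pow 2).fun_add (hv.fun_pow 2)).sqrt h₀).congr_deriv ?_
  rw [← mul_div_mul_left (u t * u' + v t * v') _ two_ne_zero]
  ring

section AlongCurve

variable {n : ℕ} (A B : Matrix (Fin n) (Fin n) ℝ) (b : Fin n → ℝ)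
  {m : ℝ → ℝ} {x : ℝ → Fin n → ℝ} {m' t : ℝ} {x' : Fin n → ℝ}

theorem hasDerivAt_PhiV (hm : HasDerivAt m m' t) (hx : HasDerivAt x x' t)
    (h₀ : ∀ i, m t ^ 2 + x t i ^ 2 ≠ 0) :
    HasDerivAt (fun s => PhiV (m s) (x s))
      (fun i => m' * (m t / √(m t ^ 2 + x t i ^ 2) - 1) +
        x t i / √(m t ^ 2 + x t i ^ 2) * x' i) t := by
  refine hasDerivAt_pi.2 fun i => ?_
  refine ((hasDerivAt_sqrt_sq_add_sq hm (hasDerivAt_pi.1 hx i) (h₀ i)).fun_sub hm).congr_deriv ?_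
  ring

theorem hasDerivAt_Hvec (hm : HasDerivAt m m' t) (hx : HasDerivAt x x' t)
    (h₀ : ∀ i, m t ^ 2 + x t i ^ 2 ≠ 0) :
    HasDerivAt (fun s => Hvec A B b (m s) (x s)) (HDvec A B (m t) (x t) m' x') t :=
  ((hasDerivAt_mulVec A hx).fun_add
    (hasDerivAt_mulVec B (hasDerivAt_PhiV hm hx h₀))).sub_const b

theorem hasDerivAt_Mfun (hm : HasDerivAt m m' t) (hx : HasDerivAt x x' t)
    (h₀ : ∀ i, m t ^ 2 + x t i ^ 2 ≠ 0) :
    HasDerivAt (fun s => Mfun A B b (m s) (x s))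
      (2 * (m t * m' + ∑ i, Hvec A B b (m t) (x t) i * HDvec A B (m t) (x t) m' x' i)) t := by
  have hH := hasDerivAt_pi.1 (hasDerivAt_Hvec A B b hm hx h₀)
  refine ((hm.fun_pow 2).fun_add
    (HasDerivAt.fun_sum fun i _ => (hH i).fun_pow 2)).congr_deriv ?_
  simp only [Nat.cast_ofNat, Nat.add_one_sub_one, pow_one, mul_add, Finset.mul_sum, mul_assoc]

end AlongCurve

section NewtonStep

variable {n : ℕ} (A B : Matrix (Fin n) (Fin n) ℝ) (b : Fin n → ℝ) (μ : ℝ) (x : Fin n → ℝ)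

theorem sq_le_Mfun : μ ^ 2 ≤ Mfun A B b μ x :=
  le_add_of_nonneg_right (Finset.sum_nonneg fun _ _ => sq_nonneg _)

theorem hasDerivAt_Mfun_newton_step {β Δμ : ℝ} {Δx : Fin n → ℝ}
    (h₀ : ∀ i, μ ^ 2 + x i ^ 2 ≠ 0) (hΔμ : Δμ = -μ + β)
    (hΔx : HDvec A B μ x Δμ Δx = -Hvec A B b μ x) :
    HasDerivAt (fun t : ℝ => Mfun A B b (μ + t * Δμ) (x + t • Δx))
      (2 * (β * μ - Mfun A B b μ x)) 0 := by
  have hm : HasDerivAt (fun t : ℝ => μ + t * Δμ) Δμ 0 := (hasDerivAt_mul_const Δμ).const_add μ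
  have hx : HasDerivAt (fun t : ℝ => x + t • Δx) Δx 0 := by
    simpa using ((hasDerivAt_id (0 : ℝ)).smul_const Δx).const_add x
  refine (hasDerivAt_Mfun A B b hm hx (by simpa using h₀)).congr_deriv ?_
  simp only [zero_mul, zero_smul, add_zero, hΔx, Pi.neg_apply, mul_neg, ← sq,
    Finset.sum_neg_distrib]
  rw [hΔμ, Mfun]
  ring

theorem stmt16_general (β γ Δμ : ℝ) (Δx : Fin n → ℝ)
    (h₀ : ∀ i, μ ^ 2 + x i ^ 2 ≠ 0) (hβ : β * μ < Mfun A B b μ x)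
    (hN1 : Δμ = -μ + β) (hN2 : HDvec A B μ x Δμ Δx = -Hvec A B b μ x) :
    ∀ᶠ t in 𝓝[>] (0 : ℝ), Mfun A B b (μ + t * Δμ) (x + t • Δx) <
      Mfun A B b μ x - γ * (t ^ 2 * (Δμ ^ 2 + ∑ i, Δx i ^ 2)) := by
  have hderiv := hasDerivAt_Mfun_newton_step A B b μ x h₀ hN1 hN2
  have hneg : 2 * (β * μ - Mfun A B b μ x) < 0 := by linarith
  filter_upwards [eventually_lt_sub_mul_sq_of_hasDerivWithinAt_neg hderiv.hasDerivWithinAt hneg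
    (γ * (Δμ ^ 2 + ∑ i, Δx i ^ 2))] with t ht
  simp only [zero_mul, zero_smul, add_zero, sub_zero] at ht
  linarith

end NewtonStep

theorem stmt16 {n : ℕ} (A B : Matrix (Fin n) (Fin n) ℝ) (b : Fin n → ℝ)
    (μ : ℝ) (x : Fin n → ℝ) (β γ δ C : ℝ)
    (hμ : 0 < μ) (hβ0 : 0 < β) (hβμ : β < μ) (hγ : 0 < γ) (hδ : δ ∈ Set.Ioo (0 : ℝ) 1)
    (hC : Mfun A B b μ x ≤ C)
    (Δμ : ℝ) (Δx : Fin n → ℝ)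
    (hN1 : Δμ = -μ + β)
    (hN2 : HDvec A B μ x Δμ Δx = -(Hvec A B b μ x)) :
    ∃ l : ℕ,
      Mfun A B b (μ + δ ^ l * Δμ) (x + δ ^ l • Δx) ≤
        C - γ * ((δ ^ l) ^ 2 * (Δμ ^ 2 + ∑ i, Δx i ^ 2)) := by
  have hβ : β * μ < Mfun A B b μ x := calc
    β * μ < μ * μ := mul_lt_mul_of_pos_right hβμ hμ
    _ = μ ^ 2 := (sq μ).symm
    _ ≤ Mfun A B b μ x := sq_le_Mfun A B b μ x
  obtain ⟨l, hl⟩ := ((tendsto_pow_atTop_nhdsWithin_zero_of_lt_one hδ.1 hδ.2).eventually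
    (stmt16_general A B b μ x β γ Δμ Δx (fun i => by positivity) hβ hN1 hN2)).exists
  exact ⟨l, by linarith⟩
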